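/- (Local optima are asymptotically valid estimators, deterministic core.) Let g : ℝ^p → ℝ^m be continuously differentiable on a convex compact set Θ with Jacobian G, Lipschitz with constant L, let W be symmetric positive definite with λ_max(W) ≤ λ̄_W, and let θ̂ ∈ Θ satisfy G(θ̂)ᵀ W g(θ̂) = 0. Suppose s := min over θ₁ ∈ Θ of σ_min[G(θ₁)ᵀ W Ḡ(θ₁)] > 0, where Ḡ(θ₁) := ∫₀¹ G(θ̂ + t(θ₁ − θ̂)) dt, and let C₁ := max_{θ∈Θ} σ_max[G(θ)ᵀW^{1/2}] / s. Then any θ ∈ Θ satisfying G(θ)ᵀ W g(θ) = 0 obeys ‖θ − θ̂‖ ≤ (L·√λ̄_W·C₁ / s)·‖g(θ̂)‖²_W. -/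

import Mathlib

open Matrix Set MeasureTheory
open scoped BigOperators

noncomputable section

/-- Euclidean norm of a vector in `Fin n → ℝ`. -/
def enorm' {n : ℕ} (v : Fin n → ℝ) : ℝ := Real.sqrt (∑ i, v i ^ 2)

/-- Smallest singular value of a matrix. -/
def sigMin {m p : ℕ} (A : Matrix (Fin m) (Fin p) ℝ) : ℝ :=
  sInf {c : ℝ | ∃ v : Fin p → ℝ, enorm' v = 1 ∧ c = enorm' (A *ᵥ v)}

/-- Largest singular value of a matrix (operator norm). -/
def sigMax {m p : ℕ} (A : Matrix (Fin m) (Fin p) ℝ) : ℝ :=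
  sSup {c : ℝ | ∃ v : Fin p → ℝ, enorm' v = 1 ∧ c = enorm' (A *ᵥ v)}

/-- Smallest eigenvalue of a (symmetric) square matrix, via the Rayleigh quotient. -/
def lamMin {n : ℕ} (A : Matrix (Fin n) (Fin n) ℝ) : ℝ :=
  sInf {c : ℝ | ∃ v : Fin n → ℝ, enorm' v = 1 ∧ c = v ⬝ᵥ (A *ᵥ v)}

/-- Largest eigenvalue of a (symmetric) square matrix, via the Rayleigh quotient. -/
def lamMax {n : ℕ} (A : Matrix (Fin n) (Fin n) ℝ) : ℝ :=
  sSup {c : ℝ | ∃ v : Fin n → ℝ, enorm' v = 1 ∧ c = v ⬝ᵥ (A *ᵥ v)}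

/-- Weighted norm `‖v‖_W = √(vᵀ W v)`. -/
def wnorm {m : ℕ} (W : Matrix (Fin m) (Fin m) ℝ) (v : Fin m → ℝ) : ℝ :=
  Real.sqrt (v ⬝ᵥ (W *ᵥ v))

/-- A matrix viewed as a continuous linear map `ℝ^p → ℝ^m`. -/
def toCLM {m p : ℕ} (A : Matrix (Fin m) (Fin p) ℝ) : (Fin p → ℝ) →L[ℝ] (Fin m → ℝ) :=
  LinearMap.toContinuousLinearMap A.mulVecLin

lemma en_eq {n : ℕ} (v : Fin n → ℝ) : enorm' v = ‖WithLp.toLp 2 v‖ := by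
  simp [enorm', EuclideanSpace.norm_eq]

lemma en_nonneg {n : ℕ} (v : Fin n → ℝ) : 0 ≤ enorm' v := Real.sqrt_nonneg _

lemma en_add {n : ℕ} (v w : Fin n → ℝ) : enorm' (v + w) ≤ enorm' v + enorm' w := by
  simp only [en_eq, WithLp.toLp_add]; exact norm_add_le _ _

lemma en_neg {n : ℕ} (v : Fin n → ℝ) : enorm' (-v) = enorm' v := by
  simp [enorm']

lemma en_smul {n : ℕ} (c : ℝ) (v : Fin n → ℝ) : enorm' (c • v) = |c| * enorm' v := by
  simp only [en_eq, WithLp.toLp_smul, norm_smul, Real.norm_eq_abs]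

lemma en_sq {n : ℕ} (v : Fin n → ℝ) : enorm' v ^ 2 = v ⬝ᵥ v := by
  unfold enorm'
  rw [Real.sq_sqrt (by positivity)]
  simp [dotProduct, sq]

lemma en_cs {n : ℕ} (v w : Fin n → ℝ) : v ⬝ᵥ w ≤ enorm' v * enorm' w := by
  exact Real.sum_mul_le_sqrt_mul_sqrt Finset.univ v w

lemma en_coord {n : ℕ} (v : Fin n → ℝ) (i : Fin n) : |v i| ≤ enorm' v := by
  unfold enorm'
  apply Real.abs_le_sqrt
  exact Finset.single_le_sum (f := fun i => v i ^ 2) (fun i _ => sq_nonneg _) (Finset.mem_univ i)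

lemma en_zero_iff {n : ℕ} (v : Fin n → ℝ) : enorm' v = 0 ↔ v = 0 := by
  simp [en_eq]

lemma en_cont {n : ℕ} : Continuous (fun v : Fin n → ℝ => enorm' v) := by
  unfold enorm'; fun_prop

lemma en_unit {n : ℕ} (v : Fin n → ℝ) (hv : v ≠ 0) : enorm' ((enorm' v)⁻¹ • v) = 1 := by
  have h : enorm' v ≠ 0 := by rwa [Ne, en_zero_iff]
  rw [en_smul, abs_of_nonneg (inv_nonneg.2 (en_nonneg v)), inv_mul_cancel₀ h]

lemma sphere_compact (n : ℕ) : IsCompact {v : Fin n → ℝ | enorm' v = 1} := by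
  apply Metric.isCompact_of_isClosed_isBounded
  · exact isClosed_eq en_cont continuous_const
  · refine (Metric.isBounded_closedBall (x := (0 : Fin n → ℝ)) (r := 1)).subset ?_
    intro v hv
    rw [mem_closedBall_zero_iff, pi_norm_le_iff_of_nonneg zero_le_one]
    intro i
    have := en_coord v i
    rw [show enorm' v = 1 from hv] at this
    exact this

lemma bdd_of_cont {n : ℕ} (f : (Fin n → ℝ) → ℝ) (hf : Continuous f) :
    BddAbove {c : ℝ | ∃ v : Fin n → ℝ, enorm' v = 1 ∧ c = f v} := by
  have h := ((sphere_compact n).image hf).bddAbove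
  refine h.mono ?_
  rintro c ⟨v, hv, rfl⟩
  exact ⟨v, hv, rfl⟩

lemma mulVec_cont {m p : ℕ} (A : Matrix (Fin m) (Fin p) ℝ) :
    Continuous (fun v : Fin p → ℝ => A *ᵥ v) := by
  exact continuous_const.matrix_mulVec continuous_id

lemma le_sigMax {m p : ℕ} (A : Matrix (Fin m) (Fin p) ℝ) (v : Fin p → ℝ) (hv : enorm' v = 1) :
    enorm' (A *ᵥ v) ≤ sigMax A :=
  le_csSup (bdd_of_cont (fun v => enorm' (A *ᵥ v)) (en_cont.comp (mulVec_cont A))) ⟨v, hv, rfl⟩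

lemma sigMax_nonneg {m p : ℕ} (A : Matrix (Fin m) (Fin p) ℝ) : 0 ≤ sigMax A := by
  apply Real.sSup_nonneg
  rintro c ⟨v, hv, rfl⟩
  exact en_nonneg _

lemma sigMax_le {m p : ℕ} (A : Matrix (Fin m) (Fin p) ℝ) (K : ℝ) (hK : 0 ≤ K)
    (h : ∀ v, enorm' (A *ᵥ v) ≤ K * enorm' v) : sigMax A ≤ K := by
  apply Real.sSup_le _ hK
  rintro c ⟨v, hv, rfl⟩
  simpa [hv] using h v

lemma mulVec_scale {m p : ℕ} (A : Matrix (Fin m) (Fin p) ℝ) (v : Fin p → ℝ) (hv : v ≠ 0) :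
    enorm' (A *ᵥ v) = enorm' (A *ᵥ ((enorm' v)⁻¹ • v)) * enorm' v := by
  have h : enorm' v ≠ 0 := by rwa [Ne, en_zero_iff]
  rw [Matrix.mulVec_smul, en_smul, abs_of_nonneg (inv_nonneg.2 (en_nonneg v))]
  field_simp

lemma sigMax_bound {m p : ℕ} (A : Matrix (Fin m) (Fin p) ℝ) (v : Fin p → ℝ) :
    enorm' (A *ᵥ v) ≤ sigMax A * enorm' v := by
  by_cases hv : v = 0
  · subst hv
    simp [(en_zero_iff _).2]
  · rw [mulVec_scale A v hv]
    exact mul_le_mul_of_nonneg_right (le_sigMax A _ (en_unit v hv)) (en_nonneg v)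

lemma sigMin_bound {m p : ℕ} (A : Matrix (Fin m) (Fin p) ℝ) (v : Fin p → ℝ) :
    sigMin A * enorm' v ≤ enorm' (A *ᵥ v) := by
  by_cases hv : v = 0
  · subst hv
    simp [(en_zero_iff _).2]
  · rw [mulVec_scale A v hv]
    refine mul_le_mul_of_nonneg_right (csInf_le ⟨0, ?_⟩ ⟨_, en_unit v hv, rfl⟩) (en_nonneg v)
    rintro c ⟨v, hv, rfl⟩
    exact en_nonneg _

lemma sigMin_nonneg {m p : ℕ} (A : Matrix (Fin m) (Fin p) ℝ) : 0 ≤ sigMin A := by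
  apply Real.sInf_nonneg
  rintro c ⟨v, hv, rfl⟩
  exact en_nonneg _

lemma sigMax_transpose {m p : ℕ} (A : Matrix (Fin m) (Fin p) ℝ) (u : Fin m → ℝ) :
    enorm' (Aᵀ *ᵥ u) ≤ sigMax A * enorm' u := by
  by_cases h : enorm' (Aᵀ *ᵥ u) = 0
  · rw [h]; exact mul_nonneg (sigMax_nonneg A) (en_nonneg u)
  · have hp : 0 < enorm' (Aᵀ *ᵥ u) := lt_of_le_of_ne (en_nonneg _) (Ne.symm h)
    have h1 : enorm' (Aᵀ *ᵥ u) ^ 2 = u ⬝ᵥ (A *ᵥ (Aᵀ *ᵥ u)) := by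
      rw [en_sq, Matrix.dotProduct_mulVec u, Matrix.mulVec_transpose]
    have h2 := en_cs u (A *ᵥ (Aᵀ *ᵥ u))
    have h3 := mul_le_mul_of_nonneg_left (sigMax_bound A (Aᵀ *ᵥ u)) (en_nonneg u)
    refine le_of_mul_le_mul_right ?_ hp
    nlinarith

lemma entry_le {m p : ℕ} (A : Matrix (Fin m) (Fin p) ℝ) (i : Fin m) (j : Fin p) :
    |A i j| ≤ sigMax A := by
  have h1 : enorm' (Pi.single j (1:ℝ)) = 1 := by
    have : enorm' (Pi.single j (1:ℝ)) ^ 2 = 1 := by rw [en_sq]; simp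
    nlinarith [en_nonneg (Pi.single j (1:ℝ))]
  have h2 := en_coord (A *ᵥ Pi.single j (1:ℝ)) i
  have h3 := le_sigMax A _ h1
  simp at h2 h3
  exact h2.trans h3

lemma rayleigh {n : ℕ} (A : Matrix (Fin n) (Fin n) ℝ) (v : Fin n → ℝ) :
    v ⬝ᵥ (A *ᵥ v) ≤ lamMax A * enorm' v ^ 2 := by
  by_cases hv : v = 0
  · subst hv
    simp [(en_zero_iff _).2]
  · have h : enorm' v ≠ 0 := by rwa [Ne, en_zero_iff]
    have hc : Continuous (fun v : Fin n → ℝ => v ⬝ᵥ (A *ᵥ v)) :=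
      continuous_id.dotProduct (mulVec_cont A)
    have := le_csSup (bdd_of_cont _ hc) ⟨_, en_unit v hv, rfl⟩
    have h2 := mul_le_mul_of_nonneg_right this (sq_nonneg (enorm' v))
    refine le_trans (le_of_eq ?_) h2
    simp only [Matrix.mulVec_smul, dotProduct_smul, smul_dotProduct, smul_eq_mul]
    field_simp

lemma wnorm_eq {m : ℕ} {W S : Matrix (Fin m) (Fin m) ℝ} (hS : S.PosDef) (hSW : S * S = W)
    (v : Fin m → ℝ) : v ⬝ᵥ (W *ᵥ v) = enorm' (S *ᵥ v) ^ 2 := by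
  have hT : Sᵀ = S := by simpa using hS.isHermitian.eq
  rw [en_sq, ← hSW, ← Matrix.mulVec_mulVec, Matrix.dotProduct_mulVec, ← Matrix.mulVec_transpose, hT]

lemma ftc {p m : ℕ} (Θ : Set (Fin p → ℝ))
    (g : (Fin p → ℝ) → (Fin m → ℝ))
    (G : (Fin p → ℝ) → Matrix (Fin m) (Fin p) ℝ)
    (θhat : Fin p → ℝ) (L : ℝ)
    (hΘconv : Convex ℝ Θ)
    (hG : ∀ θ ∈ Θ, HasFDerivWithinAt g (toCLM (G θ)) Θ θ)
    (hLip : ∀ θ₁ ∈ Θ, ∀ θ₂ ∈ Θ, sigMax (G θ₁ - G θ₂) ≤ L * enorm' (θ₁ - θ₂))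
    (hθhat : θhat ∈ Θ) (B : Matrix (Fin m) (Fin p) ℝ) (θ : Fin p → ℝ) (hθ : θ ∈ Θ)
    (hB : ∀ i j, B i j = ∫ t in (0:ℝ)..1, G (θhat + t • (θ - θhat)) i j) :
    g θ = g θhat + B *ᵥ (θ - θhat) := by
  have hline : ∀ t ∈ Icc (0:ℝ) 1, θhat + t • (θ - θhat) ∈ Θ := fun t ht =>
    hΘconv.add_smul_sub_mem hθhat hθ ht
  have hcont : ∀ i j, ContinuousOn (fun t : ℝ => G (θhat + t • (θ - θhat)) i j) (Icc 0 1) := by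
    intro i j t ht
    rw [ContinuousWithinAt, tendsto_iff_dist_tendsto_zero]
    have hc : Continuous (fun r : ℝ => L * enorm' ((θhat + r • (θ - θhat)) - (θhat + t • (θ - θhat)))) :=
      continuous_const.mul (en_cont.comp (by fun_prop))
    have hz : Filter.Tendsto (fun r : ℝ => L * enorm' ((θhat + r • (θ - θhat)) - (θhat + t • (θ - θhat))))
        (nhdsWithin t (Icc 0 1)) (nhds 0) := by
      have := (hc.tendsto t).mono_left (nhdsWithin_le_nhds (s := Icc 0 1))
      simpa [(en_zero_iff _).2] using this
    refine squeeze_zero' (Filter.Eventually.of_forall fun _ => dist_nonneg) ?_ hz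
    filter_upwards [self_mem_nhdsWithin] with r hr
    rw [Real.dist_eq]
    exact (entry_le (G (θhat + r • (θ - θhat)) - G (θhat + t • (θ - θhat))) i j).trans
      (hLip _ (hline r hr) _ (hline t ht))
  have hder : ∀ t ∈ Icc (0:ℝ) 1, HasDerivWithinAt (fun t : ℝ => g (θhat + t • (θ - θhat)))
      (G (θhat + t • (θ - θhat)) *ᵥ (θ - θhat)) (Icc 0 1) t := by
    intro t ht
    have h1 : HasDerivWithinAt (fun t : ℝ => θhat + t • (θ - θhat)) (θ - θhat) (Icc 0 1) t := by
      simpa using (((hasDerivAt_id t).smul_const (θ - θhat)).const_add θhat).hasDerivWithinAt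
    exact (hG _ (hline t ht)).comp_hasDerivWithinAt t h1 hline
  have hGint : ∀ i j, IntervalIntegrable (fun t : ℝ => G (θhat + t • (θ - θhat)) i j) volume 0 1 := by
    intro i j
    apply ContinuousOn.intervalIntegrable
    rw [uIcc_of_le zero_le_one]
    exact hcont i j
  funext i
  have hI : IntervalIntegrable (fun t : ℝ => (G (θhat + t • (θ - θhat)) *ᵥ (θ - θhat)) i) volume 0 1 := by
    apply ContinuousOn.intervalIntegrable
    rw [uIcc_of_le zero_le_one]
    simp only [Matrix.mulVec, dotProduct]
    exact continuousOn_finsetSum _ fun j _ => (hcont i j).mul continuousOn_const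
  have key := intervalIntegral.integral_eq_sub_of_hasDerivAt_of_le (zero_le_one (α := ℝ))
    (f := fun t : ℝ => g (θhat + t • (θ - θhat)) i)
    (f' := fun t : ℝ => (G (θhat + t • (θ - θhat)) *ᵥ (θ - θhat)) i)
    (fun t ht => ((hasDerivWithinAt_pi.1 (hder t ht)) i).continuousWithinAt)
    (fun t ht => ((hasDerivWithinAt_pi.1 (hder t (Ioo_subset_Icc_self ht))) i).hasDerivAt
      (Icc_mem_nhds ht.1 ht.2)) hI
  have e : (∫ t in (0:ℝ)..1, (G (θhat + t • (θ - θhat)) *ᵥ (θ - θhat)) i) = (B *ᵥ (θ - θhat)) i := by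
    simp only [Matrix.mulVec, dotProduct]
    rw [intervalIntegral.integral_finsetSum fun j _ => (hGint i j).mul_const _]
    refine Finset.sum_congr rfl fun j _ => ?_
    rw [intervalIntegral.integral_mul_const, hB]
  rw [e] at key
  simp at key
  simp [key]

/-- Local optima are second-order close to the GMM minimizer
(deterministic core of Proposition 2). -/
theorem local_optima_second_bound
    {p m : ℕ} (Θ : Set (Fin p → ℝ))
    (g : (Fin p → ℝ) → (Fin m → ℝ))
    (G : (Fin p → ℝ) → Matrix (Fin m) (Fin p) ℝ)
    (Gbar : (Fin p → ℝ) → Matrix (Fin m) (Fin p) ℝ)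
    (W S : Matrix (Fin m) (Fin m) ℝ)
    (θhat : Fin p → ℝ) (L Whi s C₁ : ℝ)
    (hΘconv : Convex ℝ Θ) (hΘcomp : IsCompact Θ)
    (hg : ContDiffOn ℝ 1 g Θ)
    (hG : ∀ θ ∈ Θ, HasFDerivWithinAt g (toCLM (G θ)) Θ θ)
    (hL : 0 ≤ L)
    (hLip : ∀ θ₁ ∈ Θ, ∀ θ₂ ∈ Θ, sigMax (G θ₁ - G θ₂) ≤ L * enorm' (θ₁ - θ₂))
    (hW : W.PosDef) (hS : S.PosDef) (hSW : S * S = W)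
    (hWmax : lamMax W ≤ Whi)
    (hθhat : θhat ∈ Θ)
    (hfoc : (G θhat)ᵀ *ᵥ (W *ᵥ g θhat) = 0)
    (hGbar : ∀ θ₁ : Fin p → ℝ, ∀ i j,
      Gbar θ₁ i j = ∫ t in (0:ℝ)..1, G (θhat + t • (θ₁ - θhat)) i j)
    (hs : s = sInf ((fun θ₁ => sigMin ((G θ₁)ᵀ * W * Gbar θ₁)) '' Θ))
    (hspos : 0 < s)
    (hC₁ : C₁ = sSup ((fun θ => sigMax ((G θ)ᵀ * S)) '' Θ) / s) :
    ∀ θ ∈ Θ, (G θ)ᵀ *ᵥ (W *ᵥ g θ) = 0 →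
      enorm' (θ - θhat) ≤ (L * Real.sqrt Whi * C₁ / s) * wnorm W (g θhat) ^ 2 := by
  intro θ hθ hfocθ
  have hexp := ftc Θ g G θhat L hΘconv hG hLip hθhat (Gbar θ) θ hθ (hGbar θ)
  set δ := θ - θhat with hδ
  set γ := g θhat with hγ
  -- norm of `S γ` is the weighted norm
  have hw : wnorm W γ = enorm' (S *ᵥ γ) := by
    rw [wnorm, wnorm_eq hS hSW, Real.sqrt_sq (en_nonneg _)]
  have hid : ((G θ)ᵀ * W * Gbar θ) *ᵥ δ = -((G θ)ᵀ *ᵥ (W *ᵥ γ)) := by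
    rw [hexp, Matrix.mulVec_add, Matrix.mulVec_add] at hfocθ
    rw [← Matrix.mulVec_mulVec, ← Matrix.mulVec_mulVec]
    exact eq_neg_of_add_eq_zero_right hfocθ
  have hsle : s ≤ sigMin ((G θ)ᵀ * W * Gbar θ) := by
    rw [hs]
    refine csInf_le ⟨0, ?_⟩ ⟨θ, hθ, rfl⟩
    rintro c ⟨x, _, rfl⟩
    exact sigMin_nonneg _
  have hbase : s * enorm' δ ≤ enorm' ((G θ)ᵀ *ᵥ (W *ᵥ γ)) := by
    have h1 := sigMin_bound ((G θ)ᵀ * W * Gbar θ) δ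
    rw [hid, en_neg] at h1
    exact (mul_le_mul_of_nonneg_right hsle (en_nonneg δ)).trans h1
  -- the supremum defining `C₁` is finite
  have hbdd : BddAbove ((fun θ => sigMax ((G θ)ᵀ * S)) '' Θ) := by
    have hc : Continuous (fun x : Fin p → ℝ => enorm' (x - θhat)) :=
      en_cont.comp (by fun_prop)
    obtain ⟨D, hD⟩ := (hΘcomp.image hc).bddAbove
    have hD' : ∀ x ∈ Θ, enorm' (x - θhat) ≤ D := fun x hx => hD ⟨x, hx, rfl⟩
    have hD0 : 0 ≤ D := (en_nonneg _).trans (hD' _ hθhat)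
    refine ⟨L * D * sigMax S + sigMax ((G θhat)ᵀ * S), ?_⟩
    rintro c ⟨x, hx, rfl⟩
    refine sigMax_le _ _ (add_nonneg (mul_nonneg (mul_nonneg hL hD0) (sigMax_nonneg _))
      (sigMax_nonneg _)) fun v => ?_
    have e : ((G x)ᵀ * S) *ᵥ v = (G x - G θhat)ᵀ *ᵥ (S *ᵥ v) + ((G θhat)ᵀ * S) *ᵥ v := by
      rw [Matrix.transpose_sub, Matrix.sub_mulVec, ← Matrix.mulVec_mulVec, ← Matrix.mulVec_mulVec]
      abel
    rw [e, add_mul]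
    refine (en_add _ _).trans (add_le_add ?_ (sigMax_bound _ _))
    have h1 := sigMax_transpose (G x - G θhat) (S *ᵥ v)
    have h2 : sigMax (G x - G θhat) ≤ L * D :=
      (hLip x hx θhat hθhat).trans (mul_le_mul_of_nonneg_left (hD' x hx) hL)
    have h3 := mul_le_mul h2 (sigMax_bound S v) (en_nonneg _) (mul_nonneg hL hD0)
    rw [mul_assoc (L * D)]
    exact h1.trans h3
  -- first bound
  have hfirst : enorm' δ ≤ C₁ * wnorm W γ := by
    have e : (G θ)ᵀ *ᵥ (W *ᵥ γ) = ((G θ)ᵀ * S) *ᵥ (S *ᵥ γ) := by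
      rw [← hSW, Matrix.mulVec_mulVec, Matrix.mulVec_mulVec, Matrix.mul_assoc]
    have h1 := sigMax_bound ((G θ)ᵀ * S) (S *ᵥ γ)
    rw [← e, ← hw] at h1
    have h2 : sigMax ((G θ)ᵀ * S) ≤ sSup ((fun θ => sigMax ((G θ)ᵀ * S)) '' Θ) :=
      le_csSup hbdd ⟨θ, hθ, rfl⟩
    have h3 := hbase.trans (h1.trans (mul_le_mul_of_nonneg_right h2 (Real.sqrt_nonneg _)))
    rw [hC₁, div_mul_eq_mul_div, le_div_iff₀ hspos, mul_comm]
    exact h3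
  -- second bound
  have hWγ : enorm' (W *ᵥ γ) ≤ Real.sqrt Whi * wnorm W γ := by
    have e : W *ᵥ γ = S *ᵥ (S *ᵥ γ) := by rw [Matrix.mulVec_mulVec, hSW]
    rw [hw, ← Real.sqrt_sq (en_nonneg (W *ᵥ γ)), ← Real.sqrt_sq (en_nonneg (S *ᵥ γ)),
      ← Real.sqrt_mul' _ (sq_nonneg _)]
    apply Real.sqrt_le_sqrt
    rw [e, ← wnorm_eq hS hSW (S *ᵥ γ)]
    exact (rayleigh W _).trans (mul_le_mul_of_nonneg_right hWmax (sq_nonneg _))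
  have hsecond : s * enorm' δ ≤ L * enorm' δ * (Real.sqrt Whi * wnorm W γ) := by
    have e : (G θ)ᵀ *ᵥ (W *ᵥ γ) = (G θ - G θhat)ᵀ *ᵥ (W *ᵥ γ) := by
      rw [Matrix.transpose_sub, Matrix.sub_mulVec, hfoc, sub_zero]
    rw [e] at hbase
    exact hbase.trans ((sigMax_transpose _ _).trans
      (mul_le_mul (hLip θ hθ θhat hθhat) hWγ (en_nonneg _) (mul_nonneg hL (en_nonneg _))))
  have hfac : 0 ≤ L * (Real.sqrt Whi * wnorm W γ) :=
    mul_nonneg hL (mul_nonneg (Real.sqrt_nonneg _) (Real.sqrt_nonneg _))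
  have h4 := mul_le_mul_of_nonneg_left hfirst hfac
  rw [div_mul_eq_mul_div, le_div_iff₀ hspos]
  nlinarith
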